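/- Let F be the free group on two generators a, b. If u, v ∈ F generate F, then the commutator [u,v] is conjugate in F to [a,b] or to [a,b]⁻¹. -/

import Mathlib

namespace FreeGroup.Nielsen14

abbrev G := FreeGroup (Fin 2)

theorem exists_decomp : ∀ (X Y : List (Fin 2 × Bool)), IsReduced X → IsReduced Y →
    ∃ p s t, X = p ++ s ∧ Y = p ++ t ∧ IsReduced (invRev s ++ t) := by
  have hinv : ∀ X : List (Fin 2 × Bool), IsReduced X → IsReduced (invRev X) := by
    intro X hX
    have h1 : (mk X).toWord = X := by rw [toWord_mk, hX.reduce_eq]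
    have h2 := isReduced_toWord (x := (mk X)⁻¹)
    rwa [toWord_inv, h1] at h2
  intro X
  induction X with
  | nil => intro Y _ hY; exact ⟨[], [], Y, rfl, rfl, by simpa using hY⟩
  | cons a X ih =>
    intro Y hX hY
    cases Y with
    | nil => exact ⟨[], a :: X, [], rfl, rfl, by simpa using hinv _ hX⟩
    | cons b Y =>
      by_cases hab : a = b
      · subst hab
        obtain ⟨p, s, t, h1, h2, h3⟩ := ih Y (hX.infix ⟨[a], [], by simp⟩)
          (hY.infix ⟨[a], [], by simp⟩)
        exact ⟨a :: p, s, t, by simp [h1], by simp [h2], h3⟩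
      · refine ⟨[], a :: X, b :: Y, rfl, rfl, ?_⟩
        have e : invRev (a :: X) = invRev X ++ [(a.1, !a.2)] := by simp [invRev]
        have h1 := hinv _ hX
        rw [e] at h1 ⊢
        refine h1.append_overlap ?_ (by simp)
        rw [List.singleton_append, isReduced_cons_cons]
        refine ⟨fun h => ?_, hY⟩
        by_contra h'
        apply hab
        ext
        · simpa using congrArg Fin.val h
        · simp only at h'
          revert h'
          cases a.2 <;> cases b.2 <;> simp

theorem decomp (x y : G) : ∃ p s t, x.toWord = p ++ s ∧ y.toWord = p ++ t ∧
    norm (x⁻¹ * y) = s.length + t.length := by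
  obtain ⟨p, s, t, h1, h2, h3⟩ := exists_decomp x.toWord y.toWord isReduced_toWord isReduced_toWord
  refine ⟨p, s, t, h1, h2, ?_⟩
  have hx : x = mk p * mk s := by rw [← mk_toWord (x := x), h1, mul_mk]
  have hy : y = mk p * mk t := by rw [← mk_toWord (x := y), h2, mul_mk]
  have : x⁻¹ * y = mk (invRev s ++ t) := by
    rw [hx, hy, ← mul_mk, ← inv_mk]; group
  rw [this, norm, toWord_mk, h3.reduce_eq]
  simp

theorem even_gromov (x y : G) : ∃ n, norm x + norm y = norm (x⁻¹ * y) + 2 * n := by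
  obtain ⟨p, s, t, h1, h2, h3⟩ := decomp x y
  refine ⟨p.length, ?_⟩
  rw [h3, norm, norm, h1, h2]
  simp; omega

theorem gromov_iff (x y : G) (k : ℕ) : norm (x⁻¹ * y) + 2 * k ≤ norm x + norm y ↔
    k ≤ norm x ∧ k ≤ norm y ∧ x.toWord.take k = y.toWord.take k := by
  constructor
  · intro h
    obtain ⟨p, s, t, h1, h2, h3⟩ := decomp x y
    rw [h3, norm, norm, h1, h2] at h
    rw [norm, norm, h1, h2]
    simp only [List.length_append] at h ⊢
    have : k ≤ p.length := by omega
    refine ⟨by omega, by omega, ?_⟩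
    rw [List.take_append_of_le_length this, List.take_append_of_le_length this]
  · rintro ⟨h1, h2, h3⟩
    have hx : x = mk (x.toWord.take k) * mk (x.toWord.drop k) := by
      rw [mul_mk, List.take_append_drop, mk_toWord]
    have hy : y = mk (x.toWord.take k) * mk (y.toWord.drop k) := by
      rw [h3, mul_mk, List.take_append_drop, mk_toWord]
    have e : x⁻¹ * y = (mk (x.toWord.drop k))⁻¹ * mk (y.toWord.drop k) := by
      calc x⁻¹ * y = (mk (x.toWord.take k) * mk (x.toWord.drop k))⁻¹ *
            (mk (x.toWord.take k) * mk (y.toWord.drop k)) := by rw [← hx, ← hy]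
        _ = _ := by group
    have h4 := norm_mul_le (mk (x.toWord.drop k))⁻¹ (mk (y.toWord.drop k))
    rw [norm_inv_eq, ← e] at h4
    have h5 := norm_mk_le (L₁ := x.toWord.drop k)
    have h6 := norm_mk_le (L₁ := y.toWord.drop k)
    rw [List.length_drop] at h5 h6
    unfold norm at *
    omega

theorem hyp {x y z : G} {k : ℕ} (h1 : norm (x⁻¹ * y) + 2 * k ≤ norm x + norm y)
    (h2 : norm (y⁻¹ * z) + 2 * k ≤ norm y + norm z) :
    norm (x⁻¹ * z) + 2 * k ≤ norm x + norm z := by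
  rw [gromov_iff] at *
  exact ⟨h1.1, h2.2.1, h1.2.2.trans h2.2.2⟩

theorem exists_initial (y : G) (k : ℕ) (hk : k ≤ norm y) :
    ∃ m : G, norm m = k ∧ norm (m⁻¹ * y) = norm y - k := by
  have e : y = mk (y.toWord.take k) * mk (y.toWord.drop k) := by
    rw [mul_mk, List.take_append_drop, mk_toWord]
  refine ⟨mk (y.toWord.take k), ?_, ?_⟩
  · have : IsReduced (y.toWord.take k) :=
      (isReduced_toWord (x := y)).infix ⟨[], y.toWord.drop k, by simp⟩
    rw [norm, toWord_mk, this.reduce_eq]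
    rw [List.length_take]; exact min_eq_left hk
  · have : IsReduced (y.toWord.drop k) :=
      isReduced_toWord.infix (List.drop_suffix _ _).isInfix
    have e2 : (mk (y.toWord.take k))⁻¹ * y = mk (y.toWord.drop k) := by
      rw [inv_mul_eq_iff_eq_mul]; exact e
    rw [e2, norm, toWord_mk, this.reduce_eq]
    simp [norm]

theorem norm_comm (x y : G) : norm (x⁻¹ * y) = norm (y⁻¹ * x) := by
  rw [← norm_inv_eq]; simp

theorem norm_lt_sq (y : G) (hy : y ≠ 1) : norm y < norm (y * y) := by
  have h := reduceCyclically.reduce_flatten_replicate_succ (isReduced_toWord (x := y)) 1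
  have h0 := reduceCyclically.conj_conjugator_reduceCyclically y.toWord
  have e : (y * y).toWord = reduce (List.replicate 2 y.toWord).flatten := by
    rw [← toWord_mk]
    congr 1
    simp [List.replicate, ← mul_mk, mk_toWord]
  have hne : reduceCyclically y.toWord ≠ [] := by
    intro h1
    rw [h1] at h0
    apply hy
    rw [← mk_toWord (x := y), ← h0, List.append_nil, ← mul_mk, ← inv_mk, mul_inv_cancel]
  have hl := List.length_pos_of_ne_nil hne
  have l1 := congrArg List.length h0
  have l2 := congrArg List.length h
  rw [← e] at l2
  unfold norm
  simp at l1 l2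
  omega

def comm (u v : G) : G := u * v * u⁻¹ * v⁻¹

def Q (c : G) : Prop := ∃ g : G, c = g * comm (of 0) (of 1) * g⁻¹ ∨
  c = g * (comm (of 0) (of 1))⁻¹ * g⁻¹

theorem Q_conj {c : G} (h : G) (hc : Q c) : Q (h * c * h⁻¹) := by
  obtain ⟨g, rfl | rfl⟩ := hc
  · exact ⟨h * g, Or.inl (by group)⟩
  · exact ⟨h * g, Or.inr (by group)⟩

theorem Q_inv {c : G} (hc : Q c) : Q c⁻¹ := by
  obtain ⟨g, rfl | rfl⟩ := hc
  · exact ⟨g, Or.inr (by group)⟩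
  · exact ⟨g, Or.inl (by group)⟩

def Bad (u v : G) : Prop := Subgroup.closure {u, v} = (⊤ : Subgroup G) ∧ ¬ Q (comm u v)

theorem closure_top {u v : G} (h : Subgroup.closure {u, v} = (⊤ : Subgroup G)) (H : Subgroup G)
    (hu : u ∈ H) (hv : v ∈ H) : H = ⊤ := by
  rw [eq_top_iff, ← h, Subgroup.closure_le]
  rintro x (rfl | rfl) <;> assumption

theorem Bad.swap {u v : G} (h : Bad u v) : Bad v u := by
  refine ⟨by rw [Set.pair_comm]; exact h.1, fun hq => h.2 ?_⟩
  have := Q_inv hq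
  convert this using 1
  unfold comm; group

theorem Bad.inv {u v : G} (h : Bad u v) : Bad u⁻¹ v := by
  have m1 : u⁻¹ ∈ Subgroup.closure {u⁻¹, v} := Subgroup.subset_closure (by simp)
  have m2 : v ∈ Subgroup.closure {u⁻¹, v} := Subgroup.subset_closure (by simp)
  refine ⟨closure_top h.1 _ (by simpa using inv_mem m1) m2, fun hq => h.2 ?_⟩
  have := Q_inv (Q_conj u hq)
  convert this using 1
  unfold comm; group

theorem Bad.mul {u v : G} (h : Bad u v) : Bad (u * v) v := by
  have m1 : u * v ∈ Subgroup.closure {u * v, v} := Subgroup.subset_closure (by simp)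
  have m2 : v ∈ Subgroup.closure {u * v, v} := Subgroup.subset_closure (by simp)
  refine ⟨closure_top h.1 _ (by simpa using mul_mem m1 (inv_mem m2)) m2, fun hq => h.2 ?_⟩
  convert hq using 1
  unfold comm; group

theorem Bad.conj {u v : G} (h : Bad u v) (g : G) : Bad (g * u * g⁻¹) (g * v * g⁻¹) := by
  have m1 : g * u * g⁻¹ ∈ Subgroup.closure {g * u * g⁻¹, g * v * g⁻¹} :=
    Subgroup.subset_closure (by simp)
  have m2 : g * v * g⁻¹ ∈ Subgroup.closure {g * u * g⁻¹, g * v * g⁻¹} :=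
    Subgroup.subset_closure (by simp)
  refine ⟨?_, fun hq => h.2 ?_⟩
  · have := closure_top h.1 ((Subgroup.closure {g * u * g⁻¹, g * v * g⁻¹}).comap
      (MulAut.conj g).toMonoidHom) (by simpa using m1) (by simpa using m2)
    rw [eq_top_iff]
    intro x _
    have hx : g⁻¹ * x * g ∈ (⊤ : Subgroup G) := trivial
    rw [← this] at hx
    simpa [mul_assoc] using hx
  · have := Q_conj g⁻¹ hq
    convert this using 1
    unfold comm; group

theorem not_comm_gen : ¬ (of 0 * of 1 : G) = of 1 * of 0 := by decide

theorem Bad.not_commute {u v : G} (h : Bad u v) : ¬ u * v = v * u := by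
  intro huv
  have h1 := closure_top h.1 (Subgroup.centralizer {u})
    (by simp [Subgroup.mem_centralizer_iff]) (by simp [Subgroup.mem_centralizer_iff, huv])
  have h2 := closure_top h.1 (Subgroup.centralizer {v})
    (by simp [Subgroup.mem_centralizer_iff, huv]) (by simp [Subgroup.mem_centralizer_iff])
  have h3 := closure_top h.1 (Subgroup.center G)
    (by
      rw [Subgroup.mem_center_iff]; intro g
      have : g ∈ Subgroup.centralizer {u} := h1 ▸ trivial
      exact (by simpa [Subgroup.mem_centralizer_iff] using this : u * g = g * u).symm)
    (by
      rw [Subgroup.mem_center_iff]; intro g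
      have : g ∈ Subgroup.centralizer {v} := h2 ▸ trivial
      exact (by simpa [Subgroup.mem_centralizer_iff] using this : v * g = g * v).symm)
  have h4 : (of 1 : G) ∈ Subgroup.center G := h3 ▸ trivial
  exact not_comm_gen (Subgroup.mem_center_iff.1 h4 _)

theorem Bad.ne_one {u v : G} (h : Bad u v) : v ≠ 1 := by
  rintro rfl; exact h.not_commute (by simp)

def MinBad (u v : G) : Prop := Bad u v ∧ ∀ u' v', Bad u' v' → norm u + norm v ≤ norm u' + norm v'

theorem MinBad.swap {u v : G} (h : MinBad u v) : MinBad v u :=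
  ⟨h.1.swap, fun u' v' h' => by have := h.2 u' v' h'; omega⟩

theorem MinBad.inv {u v : G} (h : MinBad u v) : MinBad u⁻¹ v :=
  ⟨h.1.inv, fun u' v' h' => by have := h.2 u' v' h'; rwa [norm_inv_eq]⟩

theorem MinBad.le {u v : G} (h : MinBad u v) : norm u ≤ norm (u * v) := by
  have := h.2 _ _ h.1.mul
  omega

theorem MinBad.key {s y : G} (h : MinBad s y) (h1 : norm (y * s) = norm s)
    (h2 : norm (y⁻¹ * s⁻¹) = norm s) : False := by
  obtain ⟨k, hk⟩ := even_gromov y s⁻¹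
  have hs := norm_inv_eq (x := s)
  have hy := norm_inv_eq (x := y)
  have hyk : norm y = 2 * k := by omega
  have hy0 : norm y ≠ 0 := by
    rw [Ne, norm_eq_zero]; exact h.1.ne_one
  have hle : norm y ≤ norm s := by
    have := h.swap.le
    omega
  obtain ⟨m, hm1, hm2⟩ := exists_initial y k (by omega)
  obtain ⟨q, rfl⟩ : ∃ q, y = m * q := ⟨m⁻¹ * y, by group⟩
  have hq : norm q = k := by
    rw [inv_mul_cancel_left] at hm2; omega
  have hq' := norm_inv_eq (x := q)
  have hm' := norm_inv_eq (x := m)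
  have a1 : norm (m⁻¹ * s⁻¹) + 2 * k ≤ norm m + norm s⁻¹ :=
    hyp (y := m * q) (by omega) (by omega)
  have a2 : norm ((q⁻¹)⁻¹ * s) + 2 * k ≤ norm q⁻¹ + norm s := by
    refine hyp (y := (m * q)⁻¹) ?_ ?_
    · have : (q⁻¹)⁻¹ * (m * q)⁻¹ = m⁻¹ := by group
      rw [this]; omega
    · rw [inv_inv]; omega
  rw [inv_inv] at a2
  have a3 : norm s ≤ norm q + norm (q * s) := by
    have := norm_mul_le q⁻¹ (q * s)
    rw [inv_mul_cancel_left] at this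
    omega
  have hqs := norm_inv_eq (x := q * s)
  have a4 : norm (m⁻¹ * (q * s)⁻¹) + 2 * k ≤ norm m + norm (q * s)⁻¹ := by
    refine hyp (y := s⁻¹) a1 ?_
    have : (s⁻¹)⁻¹ * (q * s)⁻¹ = q⁻¹ := by group
    rw [this]; omega
  have a5 : norm (q * s * m) = norm (m⁻¹ * (q * s)⁻¹) := by
    rw [← norm_inv_eq]; congr 1; group
  have := h.2 _ _ (h.1.mul.conj q)
  have e1 : q * (s * (m * q)) * q⁻¹ = q * s * m := by group
  have e2 : q * (m * q) * q⁻¹ = q * m := by group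
  rw [e1, e2] at this
  have := norm_mul_le q m
  omega

/-- the letters -/
def E (f : Fin 2 → G) (e : Fin 2 × Bool) : G := cond e.2 (f e.1) (f e.1)⁻¹

theorem E_not (f : Fin 2 → G) (i : Fin 2) (b : Bool) : E f (i, !b) = (E f (i, b))⁻¹ := by
  cases b <;> simp [E]

theorem norm_E (f : Fin 2 → G) (e : Fin 2 × Bool) : norm (E f e) = norm (f e.1) := by
  obtain ⟨i, b⟩ := e
  cases b <;> simp [E]

theorem E_min (f : Fin 2 → G) (h : MinBad (f 0) (f 1)) (e e' : Fin 2 × Bool) (hne : e.1 ≠ e'.1) :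
    MinBad (E f e) (E f e') := by
  have hi : ∀ {u v}, MinBad u v → MinBad u v⁻¹ := fun h => h.swap.inv.swap
  obtain ⟨i, b⟩ := e
  obtain ⟨j, c⟩ := e'
  fin_cases i <;> fin_cases j <;> first | exact absurd rfl hne | skip
  all_goals
    cases b <;> cases c <;> simp only [E, cond] <;> simp only [Fin.zero_eta, Fin.mk_one]
  · exact hi h.inv
  · exact h.inv
  · exact hi h
  · exact h
  · exact hi h.swap.inv
  · exact h.swap.inv
  · exact hi h.swap
  · exact h.swap

theorem E_ne_one (f : Fin 2 → G) (h : MinBad (f 0) (f 1)) (e : Fin 2 × Bool) : E f e ≠ 1 := by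
  refine (E_min f h (e.1 + 1, true) e ?_).1.ne_one
  obtain ⟨i, b⟩ := e
  fin_cases i <;> simp

/-- first Nielsen condition -/
theorem N1 (f : Fin 2 → G) (h : MinBad (f 0) (f 1)) (x y : Fin 2 × Bool)
    (hne : x ≠ (y.1, !y.2)) : norm (E f x) ≤ norm (E f y * E f x) := by
  by_cases hxy : x.1 = y.1
  · have : x = y := by
      obtain ⟨i, b⟩ := x
      obtain ⟨j, c⟩ := y
      simp only at hxy
      subst hxy
      cases b <;> cases c <;> simp_all
    subst this
    exact (norm_lt_sq _ (E_ne_one f h x)).le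
  · have := (E_min f h x y hxy).inv.swap.inv.swap.le
    rwa [← mul_inv_rev, norm_inv_eq, norm_inv_eq] at this

theorem N2 (f : Fin 2 → G) (h : MinBad (f 0) (f 1)) (x y z : Fin 2 × Bool)
    (hx : x ≠ (y.1, !y.2)) (hz : z ≠ y) :
    norm (E f x) + norm (E f z) < norm (E f y * E f x) + norm ((E f y)⁻¹ * E f z) := by
  have h1 := N1 f h x y hx
  have h2 := N1 f h z (y.1, !y.2) (by simpa using hz)
  rw [E_not] at h2
  by_contra hcon
  have h1' : norm (E f y * E f x) = norm (E f x) := by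
    have : E f (y.1, y.2) = E f y := rfl
    rw [this] at h2; omega
  have h2' : norm ((E f y)⁻¹ * E f z) = norm (E f z) := by
    have : E f (y.1, y.2) = E f y := rfl
    rw [this] at h2; omega
  have sq := norm_lt_sq _ (E_ne_one f h y)
  by_cases hxy : x.1 = y.1
  · have : x = y := by
      obtain ⟨i, b⟩ := x
      obtain ⟨j, c⟩ := y
      simp only at hxy
      subst hxy
      cases b <;> cases c <;> simp_all
    subst this
    omega
  by_cases hzy : z.1 = y.1
  · have : z = (y.1, !y.2) := by
      obtain ⟨i, b⟩ := z
      obtain ⟨j, c⟩ := y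
      simp only at hzy
      subst hzy
      cases b <;> cases c <;> simp_all
    rw [this, E_not, ← mul_inv_rev, norm_inv_eq, norm_inv_eq] at h2'
    have : E f (y.1, y.2) = E f y := rfl
    rw [this] at h2'
    omega
  have hxz : x.1 = z.1 := by
    have := x.1.isLt; have := y.1.isLt; have := z.1.isLt
    omega
  have hmin := E_min f h x y hxy
  by_cases hb : x = z
  · subst hb
    obtain ⟨k, hk⟩ := even_gromov (E f y) (E f x)
    have hk1 : norm (E f y) = 2 * k := by omega
    have := hyp (x := (E f y)⁻¹) (y := E f x) (z := E f y) (k := k)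
      (by rw [inv_inv, norm_inv_eq]; omega) (by rw [norm_comm]; omega)
    rw [inv_inv, norm_inv_eq] at this
    omega
  · have : z = (x.1, !x.2) := by
      obtain ⟨i, b⟩ := z
      obtain ⟨j, c⟩ := x
      simp only at hxz
      subst hxz
      cases b <;> cases c <;> simp_all
    rw [this, E_not] at h2'
    rw [norm_inv_eq] at h2'
    exact hmin.key h1' h2'

def W (f : Fin 2 → G) (L : List (Fin 2 × Bool)) : G := (L.map (E f)).prod

theorem main_ind (f : Fin 2 → G) (h : MinBad (f 0) (f 1)) (L : List (Fin 2 × Bool)) :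
    ∀ x, IsReduced (x :: L) →
    (∀ e ∈ x :: L, norm (E f e) ≤ norm (W f (x :: L))) ∧
    (∀ z, z ≠ x → norm (E f z) + norm ((W f (x :: L))⁻¹ * E f x) <
      norm ((E f x)⁻¹ * E f z) + norm (W f (x :: L))) := by
  induction L with
  | nil =>
    intro x _
    refine ⟨by simp [W], fun z hz => ?_⟩
    have h1 := N1 f h z (x.1, !x.2) (by simpa using hz)
    rw [E_not] at h1
    have : E f (x.1, x.2) = E f x := rfl
    rw [this] at h1
    have h2 : norm (E f x) ≠ 0 := by rw [Ne, norm_eq_zero]; exact E_ne_one f h x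
    simp [W]
    omega
  | cons x L ih =>
    intro y hred
    rw [isReduced_cons_cons] at hred
    obtain ⟨ih1, ih2⟩ := ih x hred.2
    have hxy : x ≠ (y.1, !y.2) := by
      rintro rfl
      simpa using hred.1 rfl
    have hyx : (y.1, !y.2) ≠ x := hxy.symm
    have hi := ih2 _ hyx
    rw [E_not] at hi
    have ey : E f (y.1, y.2) = E f y := rfl
    rw [ey] at hi
    have eW : W f (y :: x :: L) = E f y * W f (x :: L) := by simp [W]
    rw [eW]
    generalize W f (x :: L) = g at *
    have hxg := ih1 x (by simp)
    have n1 := N1 f h x y hxy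
    have n1' : norm (E f y) ≤ norm (E f y * E f x) := by
      have := N1 f h (y.1, !y.2) (x.1, !x.2) (by
        intro h'; apply hxy
        obtain ⟨i, b⟩ := x
        obtain ⟨j, c⟩ := y
        simp_all)
      rw [E_not, E_not, ← mul_inv_rev, norm_inv_eq, norm_inv_eq] at this
      exact this
    rw [norm_inv_eq] at hi
    have c1 : norm ((E f x)⁻¹ * (E f y)⁻¹) = norm (E f y * E f x) := by
      rw [← mul_inv_rev, norm_inv_eq]
    have c2 : norm (g⁻¹ * (E f y)⁻¹) = norm (E f y * g) := by
      rw [← mul_inv_rev, norm_inv_eq]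
    have len : norm (E f y * g) + norm (E f x) = norm g + norm (E f y * E f x) := by
      obtain ⟨k1, hk1⟩ := even_gromov (E f x) (E f y)⁻¹
      obtain ⟨k2, hk2⟩ := even_gromov g (E f y)⁻¹
      obtain ⟨k3, hk3⟩ := even_gromov g (E f x)
      rw [norm_inv_eq] at hk1 hk2
      have a : k1 < k3 := by omega
      have b1 := hyp (x := g) (y := E f x) (z := (E f y)⁻¹) (k := k1) (by omega)
        (by rw [norm_inv_eq]; omega)
      rw [norm_inv_eq] at b1
      have b2 : ¬ k1 < k2 := by
        intro hlt
        have := hyp (x := E f x) (y := g) (z := (E f y)⁻¹) (k := k1 + 1)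
          (by rw [norm_comm]; omega) (by rw [norm_inv_eq]; omega)
        rw [norm_inv_eq] at this
        omega
      omega
    refine ⟨?_, ?_⟩
    · intro e he
      rw [List.mem_cons] at he
      rcases he with rfl | he
      · omega
      · have := ih1 e he
        omega
    · intro z hz
      have n2 := N2 f h x y z hxy hz
      have : (E f y * g)⁻¹ * E f y = g⁻¹ := by group
      rw [this, norm_inv_eq]
      omega

theorem main_len (f : Fin 2 → G) (h : MinBad (f 0) (f 1)) (i : Fin 2) : norm (f i) ≤ 1 := by
  by_contra hcon
  have key : ∀ j : Fin 2, (of j : G) ∈ Subgroup.zpowers (f (i + 1)) := by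
    intro j
    have hmem : (of j : G) ∈ (lift f).range := by
      rw [FreeGroup.range_lift_eq_closure]
      have : Set.range f = {f 0, f 1} := by
        ext x; simp [Fin.exists_fin_two, eq_comm]
      rw [this, h.1.1]; trivial
    obtain ⟨w, hw⟩ := hmem
    rw [← mk_toWord (x := w), lift_mk] at hw
    have hw' : W f w.toWord = of j := hw
    have hred : IsReduced w.toWord := isReduced_toWord
    have hall : ∀ e ∈ w.toWord, norm (E f e) ≤ 1 := by
      generalize w.toWord = L at *
      cases L with
      | nil => simp
      | cons x L =>
        have := (main_ind f h L x hred).1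
        rw [hw', norm_of] at this
        exact this
    rw [← hw']
    apply Subgroup.list_prod_mem
    intro g hg
    rw [List.mem_map] at hg
    obtain ⟨e, he, rfl⟩ := hg
    have h1 := hall e he
    rw [norm_E] at h1
    have h2 : e.1 ≠ i := by rintro rfl; omega
    have h3 : e.1 = i + 1 := by
      have := e.1.isLt; have := i.isLt; generalize e.1 = a at *; clear * - h2; revert a i; decide
    unfold E
    rw [h3]
    cases e.2 <;> simp
  obtain ⟨a, ha⟩ := key 0
  obtain ⟨b, hb⟩ := key 1
  apply not_comm_gen
  simp only at ha hb
  rw [← ha, ← hb, ← zpow_add, ← zpow_add, add_comm a b]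

theorem letter (u : G) (h : norm u ≤ 1) (h1 : u ≠ 1) : ∃ i, u = of i ∨ u = (of i)⁻¹ := by
  have h0 : norm u ≠ 0 := by rwa [Ne, norm_eq_zero]
  have : u.toWord.length = 1 := by unfold norm at *; omega
  rw [List.length_eq_one_iff] at this
  obtain ⟨⟨i, b⟩, hb⟩ := this
  rw [← mk_toWord (x := u), hb]
  cases b
  · exact ⟨i, Or.inr rfl⟩
  · exact ⟨i, Or.inl rfl⟩

theorem no_min (u v : G) (h : MinBad u v) : False := by
  have hu := main_len ![u, v] h 0
  have hv := main_len ![u, v] h 1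
  obtain ⟨i, hi⟩ := letter u hu h.1.swap.ne_one
  obtain ⟨j, hj⟩ := letter v hv h.1.ne_one
  have hB : Bad (of i) (of j) := by
    have h1 : Bad (of i) v := by
      rcases hi with rfl | rfl
      · exact h.1
      · simpa using h.1.inv
    rcases hj with rfl | rfl
    · exact h1
    · simpa using h1.swap.inv.swap
  have h01 : ¬ Bad (of 0) (of 1) := fun hb => hb.2 ⟨1, Or.inl (by simp)⟩
  fin_cases i <;> fin_cases j
  · exact hB.not_commute rfl
  · exact h01 hB
  · exact h01 hB.swap
  · exact hB.not_commute rfl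

theorem no_bad (u v : G) : ¬ Bad u v := by
  suffices H : ∀ n, ∀ u v : G, norm u + norm v = n → ¬ Bad u v from H _ u v rfl
  intro n
  induction n using Nat.strong_induction_on with
  | _ n ih =>
    intro u v hn hb
    refine no_min u v ⟨hb, fun u' v' h' => ?_⟩
    by_contra hlt
    exact ih (norm u' + norm v') (by omega) u' v' rfl h'

end FreeGroup.Nielsen14

/-- If `u, v` generate the free group on `a, b`, then `[u,v]` is conjugate to `[a,b]`
or to `[a,b]⁻¹`. -/
theorem stmt_14 (u v : FreeGroup (Fin 2))
    (huv : Subgroup.closure {u, v} = (⊤ : Subgroup (FreeGroup (Fin 2)))) :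
    ∃ g : FreeGroup (Fin 2),
      u * v * u⁻¹ * v⁻¹ =
          g * (FreeGroup.of 0 * FreeGroup.of 1 * (FreeGroup.of 0)⁻¹ *
            (FreeGroup.of 1)⁻¹) * g⁻¹ ∨
      u * v * u⁻¹ * v⁻¹ =
          g * (FreeGroup.of 0 * FreeGroup.of 1 * (FreeGroup.of 0)⁻¹ *
            (FreeGroup.of 1)⁻¹)⁻¹ * g⁻¹ := by
  by_contra hcon
  exact FreeGroup.Nielsen14.no_bad u v ⟨huv, hcon⟩
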